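/- Let A be the C*-algebra C₀(ℂ_q) of the quantum complex plane, realized on H = ℓ²(ℤ) as the closed linear span of {(ℓ*)^k f_k(q^N) : k ∈ ℤ, f_k ∈ C₀(q^ℤ ∪ {0}), f_k(0) = 0 for k ≠ 0}, where ℓ* e_k = e_{k+1} and q^N e_k = q^k e_k for 0 < q < 1. Then the compact operators K(H) form an ideal in C₀(ℂ_q) and C₀(ℂ_q)/K(H) ≅ ℂ. -/

import Mathlib

/-! Write `K` for the norm closure of the span of the matrix units `|e i⟩⟨e j|`; it is exactly the
set of compact operators (`mem_closure_of_isCompactOperator`, `isCompactOperator_of_mem_closure`).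
Each matrix unit is a generator of `C₀(ℂ_q)`, with `f` the indicator of the point `q ^ j`, so
`K ⊆ C₀(ℂ_q)`.

Let `P` be the projection onto the closed span of the `e n` with `0 ≤ n`, which is `f(q^N)` for `f`
the indicator of `[0, 1]`. For a generator `T = (ℓ*)^k f(q^N)` the operator `T - f(0) P` is a weighted
shift whose weights vanish at `±∞`, hence lies in `K` (`weightedShift_mem_closure`). Since
`K ⊔ ℂ P` is closed (a closed subspace plus a finite-dimensional one), `C₀(ℂ_q) = K ⊔ ℂ P`, and the
sum is direct because `P` is not compact (`notMem_closure_of_fixes`). The character is the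
coefficient of `P`, extended linearly to all bounded operators; it is a `*`-homomorphism on
`C₀(ℂ_q)` because `K` is a `*`-closed ideal and `P = P* = P²`. -/

open Filter

/-! ### Compact operators and matrix units -/

/-- The span of the matrix units `|e i⟩⟨e j|` of the Hilbert basis `e`. -/
noncomputable def matrixUnitSpan {ι H : Type*} [NormedAddCommGroup H] [InnerProductSpace ℂ H]
    (e : HilbertBasis ι ℂ H) : Submodule ℂ (H →L[ℂ] H) :=
  Submodule.span ℂ {T | ∃ i j, T = InnerProductSpace.rankOne ℂ (e i) (e j)}

section General

variable {ι H : Type*} [NormedAddCommGroup H] [InnerProductSpace ℂ H]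

lemma rankOne_mem_closure (e : HilbertBasis ι ℂ H) (i : ι) (v : H) :
    InnerProductSpace.rankOne ℂ (e i) v ∈ (matrixUnitSpan e).topologicalClosure := by
  have hv : v ∈ closure (Submodule.span ℂ (Set.range e) : Set H) := by
    have := e.dense_span
    rw [← Submodule.topologicalClosure_coe, this]
    trivial
  refine map_mem_closure (f := fun v => InnerProductSpace.rankOne ℂ (e i) v)
    (InnerProductSpace.rankOne ℂ (e i)).continuous hv ?_
  intro w hw
  change InnerProductSpace.rankOne ℂ (e i) w ∈ matrixUnitSpan e
  induction hw using Submodule.span_induction with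
  | mem x hx => obtain ⟨j, rfl⟩ := hx; exact Submodule.subset_span ⟨i, j, rfl⟩
  | zero => simp
  | add x y _ _ hx hy => rw [map_add]; exact add_mem hx hy
  | smul a x _ hx => rw [map_smulₛₗ]; exact Submodule.smul_mem _ _ hx

/-- Coordinate truncations `∑ i ∈ F, |e i⟩⟨e i|` satisfy `‖1 - Q_F‖ ≤ 1`. -/
lemma norm_sub_truncation_le (e : HilbertBasis ι ℂ H) (F : Finset ι) (y : H) :
    ‖y - ∑ i ∈ F, inner ℂ (e i) y • e i‖ ≤ ‖y‖ := by
  set p := ∑ i ∈ F, inner ℂ (e i) y • e i with hp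
  have horth : inner ℂ p (y - p) = 0 := by
    conv_lhs => enter [2]; rw [hp]
    rw [sum_inner]
    refine Finset.sum_eq_zero fun i hi => ?_
    rw [inner_smul_left, inner_sub_right, hp, e.orthonormal.inner_right_sum _ hi, sub_self,
      mul_zero]
  have h := norm_add_sq_eq_norm_sq_add_norm_sq_of_inner_eq_zero p (y - p) horth
  rw [add_sub_cancel] at h
  nlinarith [norm_nonneg y, norm_nonneg (y - p), norm_nonneg p]

/-- Every compact operator is a norm limit of finite-rank truncations: the truncations converge
strongly to `1`, hence uniformly on a finite `ε`-net of the image of the unit ball, and being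
contractive they are uniformly close to `1` on the whole image. -/
lemma mem_closure_of_isCompactOperator [CompleteSpace H] (e : HilbertBasis ι ℂ H)
    {T : H →L[ℂ] H} (hT : IsCompactOperator T) :
    T ∈ (matrixUnitSpan e).topologicalClosure := by
  classical
  have hcl := (matrixUnitSpan e).isClosed_topologicalClosure
  rw [← SetLike.mem_coe, ← hcl.closure_eq, Metric.mem_closure_iff]
  intro ε hε
  have htb : TotallyBounded (T '' Metric.closedBall (0 : H) 1) :=
    (IsCompactOperator.isCompact_closure_image_closedBall (f := (T : H →ₗ[ℂ] H)) hT
      1).totallyBounded.subset subset_closure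
  obtain ⟨t, htf, ht⟩ := Metric.totallyBounded_iff.1 htb (ε / 4) (by positivity)
  have hev : ∀ᶠ F : Finset ι in atTop, ∀ z ∈ t, ‖z - ∑ i ∈ F, inner ℂ (e i) z • e i‖ < ε / 4 := by
    rw [htf.eventually_all]
    intro z _
    have h := e.hasSum_repr z
    simp only [e.repr_apply_apply] at h
    filter_upwards [Metric.tendsto_nhds.1 h (ε / 4) (by positivity)] with F hF
    rwa [dist_comm, dist_eq_norm] at hF
  obtain ⟨F, hF⟩ := hev.exists
  refine ⟨∑ i ∈ F, InnerProductSpace.rankOne ℂ (e i) (ContinuousLinearMap.adjoint T (e i)),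
    sum_mem fun i _ => rankOne_mem_closure e i _, ?_⟩
  rw [dist_eq_norm]
  refine lt_of_le_of_lt (ContinuousLinearMap.opNorm_le_of_unit_norm (C := ε / 2) (by positivity)
    fun x hx => ?_) (by linarith)
  have hTx : T x ∈ T '' Metric.closedBall (0 : H) 1 := ⟨x, by simp [hx], rfl⟩
  obtain ⟨z, hz, hd⟩ := Set.mem_iUnion₂.1 (ht hTx)
  rw [Metric.mem_ball, dist_eq_norm] at hd
  have key : (T - ∑ i ∈ F, InnerProductSpace.rankOne ℂ (e i)
      (ContinuousLinearMap.adjoint T (e i))) x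
      = ((T x - z) - ∑ i ∈ F, inner ℂ (e i) (T x - z) • e i)
        + (z - ∑ i ∈ F, inner ℂ (e i) z • e i) := by
    simp only [sub_apply, sum_apply,
      InnerProductSpace.rankOne_apply, ContinuousLinearMap.adjoint_inner_left, inner_sub_right,
      sub_smul, Finset.sum_sub_distrib]
    abel
  rw [key]
  refine (norm_add_le _ _).trans ?_
  have h1 := norm_sub_truncation_le e F (T x - z)
  have h2 := hF z hz
  linarith

lemma isCompactOperator_of_mem_closure [CompleteSpace H] (e : HilbertBasis ι ℂ H)
    {T : H →L[ℂ] H} (hT : T ∈ (matrixUnitSpan e).topologicalClosure) :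
    IsCompactOperator T := by
  have hle : (matrixUnitSpan e).topologicalClosure ≤ compactOperator (RingHom.id ℂ) H H := by
    refine Submodule.topologicalClosure_minimal _ (Submodule.span_le.2 ?_)
      isClosed_setOfPred_isCompactOperator
    rintro _ ⟨i, j, rfl⟩
    change IsCompactOperator (InnerProductSpace.rankOne ℂ (e i) (e j))
    rw [InnerProductSpace.rankOne_def']
    exact (isCompactOperator_of_locallyCompactSpace_rng
      (ContinuousLinearMap.toSpanSingleton ℂ (e i))).comp_clm (innerSL ℂ (e j))
  exact hle hT

/-! ### Weighted shifts -/

lemma HilbertBasis.hasSum_norm_inner_sq (e : HilbertBasis ι ℂ H) (x : H) :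
    HasSum (fun i => ‖inner ℂ (e i) x‖ ^ 2) (‖x‖ ^ 2) := by
  have h := lp.hasSum_norm (p := 2) (by norm_num) (e.repr x)
  simpa [e.repr_apply_apply] using h

/-- A weighted shift `e i ↦ g i • e (σ i)` has norm at most `sup |g|`. -/
lemma norm_weightedShift_le (e : HilbertBasis ι ℂ H) (σ : ι ≃ ι) (g : ι → ℂ) {C : ℝ}
    (hC : 0 ≤ C) (hg : ∀ i, ‖g i‖ ≤ C) {T : H →L[ℂ] H} (hT : ∀ i, T (e i) = g i • e (σ i)) :
    ‖T‖ ≤ C := by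
  classical
  refine ContinuousLinearMap.opNorm_le_bound _ hC fun x => ?_
  have hcoord : ∀ i, inner ℂ (e (σ i)) (T x) = g i * inner ℂ (e i) x := by
    intro i
    have : (innerSL ℂ (e (σ i))) ∘L T = g i • innerSL ℂ (e i) := by
      refine ContinuousLinearMap.ext_on (s := Set.range e)
        (Submodule.dense_iff_topologicalClosure_eq_top.2 e.dense_span) ?_
      rintro _ ⟨j, rfl⟩
      have ho := orthonormal_iff_ite.1 e.orthonormal
      by_cases hij : i = j
      · subst hij; simp [hT, e.orthonormal.1]
      · simp [hT, ho, hij]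
    simpa using congrArg (fun L : H →L[ℂ] ℂ => L x) this
  have h1 := (σ.hasSum_iff (f := fun i => ‖inner ℂ (e i) (T x)‖ ^ 2)).2
    (e.hasSum_norm_inner_sq (T x))
  have h2 := (e.hasSum_norm_inner_sq x).mul_left (C ^ 2)
  have h3 : ‖T x‖ ^ 2 ≤ C ^ 2 * ‖x‖ ^ 2 := by
    refine hasSum_le (fun i => ?_) h1 h2
    simp only [Function.comp_apply, hcoord, norm_mul, mul_pow]
    gcongr
    exact hg i
  rw [← mul_pow] at h3
  exact le_of_sq_le_sq h3 (by positivity)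

/-- A weighted shift whose weights vanish at infinity is a norm limit of its finite sections. -/
lemma weightedShift_mem_closure (e : HilbertBasis ι ℂ H) (σ : ι ≃ ι) (g : ι → ℂ)
    (hg : Tendsto g cofinite (nhds 0)) {T : H →L[ℂ] H} (hT : ∀ i, T (e i) = g i • e (σ i)) :
    T ∈ (matrixUnitSpan e).topologicalClosure := by
  classical
  change T ∈ closure _
  rw [Metric.mem_closure_iff]
  intro ε hε
  have hfin : {i | ¬ ‖g i‖ < ε / 2}.Finite := by
    have := Metric.tendsto_nhds.1 hg (ε / 2) (by positivity)
    simp only [dist_zero_right] at this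
    exact eventually_cofinite.1 this
  refine ⟨∑ i ∈ hfin.toFinset, g i • InnerProductSpace.rankOne ℂ (e (σ i)) (e i),
    sum_mem fun i _ => Submodule.smul_mem _ _ (Submodule.subset_span ⟨_, _, rfl⟩), ?_⟩
  rw [dist_eq_norm]
  refine lt_of_le_of_lt (norm_weightedShift_le e σ
    (fun i => if i ∈ hfin.toFinset then 0 else g i) (C := ε / 2) (by positivity) ?_ ?_)
    (by linarith)
  · intro i
    split_ifs with h
    · simpa using (half_pos hε).le
    · simpa using (not_not.1 (fun h' => h (hfin.mem_toFinset.2 h')) : ‖g i‖ < ε / 2).le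
  · intro j
    have ho := orthonormal_iff_ite.1 e.orthonormal
    simp only [sub_apply, sum_apply, hT,
      smul_apply, InnerProductSpace.rankOne_apply, ho, ite_smul, one_smul,
      zero_smul, smul_ite, smul_zero, Finset.sum_ite_eq']
    split_ifs <;> simp

/-! ### Adjoints and coordinate projections -/

lemma star_mem_closure [CompleteSpace H] (e : HilbertBasis ι ℂ H) {T : H →L[ℂ] H}
    (hT : T ∈ (matrixUnitSpan e).topologicalClosure) :
    star T ∈ (matrixUnitSpan e).topologicalClosure := by
  refine map_mem_closure (f := star) continuous_star (show T ∈ closure _ from hT) ?_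
  intro S hS
  change star S ∈ matrixUnitSpan e
  induction hS using Submodule.span_induction with
  | mem x hx =>
    obtain ⟨i, j, rfl⟩ := hx
    refine Submodule.subset_span ⟨j, i, ?_⟩
    rw [ContinuousLinearMap.star_eq_adjoint, InnerProductSpace.adjoint_rankOne]
  | zero => simp
  | add x y _ _ hx hy => rw [star_add]; exact add_mem hx hy
  | smul a x _ hx => rw [star_smul]; exact Submodule.smul_mem _ _ hx

/-- An operator fixing infinitely many basis vectors is not compact: elements of the span of the
matrix units kill all but finitely many basis vectors, so they stay at distance at least `1`. -/
lemma notMem_closure_of_fixes (e : HilbertBasis ι ℂ H) {P : H →L[ℂ] H}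
    (hP : {i | P (e i) = e i}.Infinite) : P ∉ (matrixUnitSpan e).topologicalClosure := by
  classical
  intro h
  obtain ⟨S, hS, hd⟩ := Metric.mem_closure_iff.1 (show P ∈ closure _ from h) 1 one_pos
  have hfin : {i | S (e i) ≠ 0}.Finite := by
    clear hd
    change S ∈ matrixUnitSpan e at hS
    induction hS using Submodule.span_induction with
    | mem x hx =>
      obtain ⟨i, j, rfl⟩ := hx
      refine (Set.finite_singleton j).subset fun l hl => ?_
      by_contra hne
      refine hl ?_
      rw [InnerProductSpace.rankOne_apply, e.orthonormal.2 (Ne.symm hne), zero_smul]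
    | zero => simp
    | add x y _ _ hx hy =>
      refine (hx.union hy).subset fun l hl => ?_
      by_contra hne
      simp only [Set.mem_union, Set.mem_ofPred_eq, not_or, not_not] at hne
      exact hl (by simp [hne.1, hne.2])
    | smul a x _ hx =>
      refine hx.subset fun l hl h0 => hl (by simp [h0])
  obtain ⟨i, hi, hi'⟩ := (hP.sdiff hfin).nonempty
  have hS0 : S (e i) = 0 := by simpa using hi'
  have hPi : P (e i) = e i := hi
  have h1 := (P - S).le_opNorm (e i)
  rw [dist_eq_norm] at hd
  rw [sub_apply, hPi, hS0, sub_zero, e.orthonormal.1 i] at h1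
  linarith

/-- The coordinate projection onto the basis vectors indexed by `s`. -/
lemma exists_coordinateProjection [CompleteSpace H] (e : HilbertBasis ι ℂ H) (s : Set ι) :
    ∃ P : H →L[ℂ] H, star P = P ∧ P * P = P ∧ (∀ i ∈ s, P (e i) = e i) ∧
      ∀ i ∉ s, P (e i) = 0 := by
  let U := (Submodule.span ℂ (e '' s)).topologicalClosure
  have : CompleteSpace U := (Submodule.isClosed_topologicalClosure _).completeSpace_coe
  refine ⟨U.starProjection, ?_, ?_, ?_, ?_⟩
  · exact (isSelfAdjoint_starProjection U)
  · exact U.isIdempotentElem_starProjection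
  · intro i hi
    exact Submodule.starProjection_eq_self_iff.2
      (Submodule.le_topologicalClosure _ (Submodule.subset_span ⟨i, hi, rfl⟩))
  · intro i hi
    rw [Submodule.starProjection_apply_eq_zero_iff, Submodule.orthogonal_closure]
    rw [Submodule.mem_orthogonal]
    intro u hu
    induction hu using Submodule.span_induction with
    | mem x hx =>
      obtain ⟨j, hj, rfl⟩ := hx
      exact e.orthonormal.2 (fun h => hi (h ▸ hj))
    | zero => simp
    | add x y _ _ hx hy => rw [inner_add_left, hx, hy, add_zero]
    | smul a x _ hx => rw [inner_smul_left, hx, mul_zero]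

end General

/-! ### The character of the quantum plane -/

/-- The quantum complex plane.  Let `H = ℓ²(ℤ)` (presented as a Hilbert space with an
orthonormal basis `e` indexed by `ℤ`), `0 < q < 1`, and let `C₀(ℂ_q)` be the closed
linear span of the operators `(ℓ*)^k f(q^N)` for `k ∈ ℤ` and `f ∈ C₀(q^ℤ ∪ {0})` with
`f(0) = 0` when `k ≠ 0`; such an operator acts by `e_n ↦ f(q^n) • e_{n+k}`, and the
conditions on `f` are that `f(q^n) → 0` as `n → -∞` (vanishing at infinity), `f(q^n) →
f(0)` as `n → +∞` (continuity at `0`).  Then the compact operators `K(H)` are contained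
in (and hence form an ideal of) `C₀(ℂ_q)`, and `C₀(ℂ_q)/K(H) ≅ ℂ`: there is a character
`φ` on `C₀(ℂ_q)` (the map `∑ (ℓ*)^k f_k(q^N) ↦ f₀(0)`), surjective onto `ℂ`, whose
kernel is exactly `K(H)`. -/
theorem stmt_18 {H : Type*} [NormedAddCommGroup H] [InnerProductSpace ℂ H]
    [CompleteSpace H] (e : HilbertBasis ℤ ℂ H)
    (q : ℝ) (hq0 : 0 < q) (hq1 : q < 1)
    (G : Set (H →L[ℂ] H))
    (hG : G = {T : H →L[ℂ] H | ∃ (k : ℤ) (f : ℝ → ℂ),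
      (∀ n : ℤ, T (e n) = f (q ^ n) • e (n + k)) ∧
      Tendsto (fun n : ℤ => f (q ^ n)) atBot (nhds 0) ∧
      Tendsto (fun n : ℤ => f (q ^ n)) atTop (nhds (f 0)) ∧
      (k ≠ 0 → f 0 = 0)})
    (Cq : Set (H →L[ℂ] H))
    (hCq : Cq = closure (Submodule.span ℂ G : Set (H →L[ℂ] H))) :
    (∀ T : H →L[ℂ] H, IsCompactOperator T → T ∈ Cq) ∧
    ∃ φ : (H →L[ℂ] H) →ₗ[ℂ] ℂ,
      (∀ a ∈ Cq, ∀ b ∈ Cq, φ (a * b) = φ a * φ b) ∧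
      (∀ a ∈ Cq, φ (star a) = starRingEnd ℂ (φ a)) ∧
      (∀ c : ℂ, ∃ a ∈ Cq, φ a = c) ∧
      (∀ a ∈ Cq, (φ a = 0 ↔ IsCompactOperator a)) := by
  classical
  set K := (matrixUnitSpan e).topologicalClosure with hK
  have hKc : ∀ T : H →L[ℂ] H, T ∈ K ↔ IsCompactOperator T := fun T =>
    ⟨isCompactOperator_of_mem_closure e, mem_closure_of_isCompactOperator e⟩
  obtain ⟨P, hPs, hPP, hP1, hP0⟩ := exists_coordinateProjection e {n : ℤ | 0 ≤ n}
  simp only [Set.mem_ofPred_eq] at hP1 hP0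
  have hPK : P ∉ K := notMem_closure_of_fixes e
    ((Set.Ici_infinite (0 : ℤ)).mono fun n hn => hP1 n hn)
  have hpow : ∀ n : ℤ, q ^ n ≤ 1 ↔ 0 ≤ n := fun n => by
    rw [← zpow_zero q]
    exact zpow_le_zpow_iff_right_of_lt_one₀ hq0 hq1
  -- `P = 1_{[0,1]}(q^N)` is one of the generators
  have hPG : P ∈ G := by
    rw [hG]
    refine ⟨0, fun x => if x ≤ 1 then 1 else 0, fun n => ?_, ?_, ?_, fun h => absurd rfl h⟩
    · by_cases hn : 0 ≤ n
      · simp [hpow, hn, hP1 n hn]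
      · simp [hpow, hn, hP0 n hn]
    · refine tendsto_const_nhds.congr' ?_
      filter_upwards [eventually_lt_atBot (0 : ℤ)] with n hn
      simp [hpow, hn]
    · refine tendsto_const_nhds.congr' ?_
      filter_upwards [eventually_ge_atTop (0 : ℤ)] with n hn
      simp [hpow, hn]
  have hunit : matrixUnitSpan e ≤ Submodule.span ℂ G := by
    refine Submodule.span_mono ?_
    rintro _ ⟨i, j, rfl⟩
    rw [hG]
    have hinj : ∀ n : ℤ, q ^ n = q ^ j ↔ n = j := fun n =>
      (zpow_right_injective₀ hq0 hq1.ne).eq_iff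
    have h0 : (0 : ℝ) ≠ q ^ j := (zpow_pos hq0 j).ne
    have ho := orthonormal_iff_ite.1 e.orthonormal
    refine ⟨i - j, fun x => if x = q ^ j then 1 else 0, fun n => ?_, ?_, ?_, fun _ => by simp [h0]⟩
    · by_cases hn : n = j
      · subst hn; simp [e.orthonormal.1]
      · simp [hinj, hn, ho, Ne.symm hn]
    · refine tendsto_const_nhds.congr' ?_
      filter_upwards [eventually_lt_atBot j] with n hn
      simp [hinj, hn.ne]
    · simp only [if_neg h0]
      refine tendsto_const_nhds.congr' ?_
      filter_upwards [eventually_gt_atTop j] with n hn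
      simp [hinj, hn.ne']
  have hKCq : ∀ T ∈ K, T ∈ Cq := fun T hT => by
    rw [hCq]
    exact closure_mono hunit hT
  -- modulo `K`, a generator `(ℓ*)^k f(q^N)` equals `f(0) • P`
  have hGK : ∀ T ∈ G, T ∈ K ⊔ Submodule.span ℂ {P} := by
    intro T hT
    rw [hG] at hT
    obtain ⟨k, f, hTe, hbot, htop, hk⟩ := hT
    have hmem : T - f 0 • P ∈ K := by
      refine weightedShift_mem_closure e (Equiv.addRight k)
        (fun n => f (q ^ n) - if 0 ≤ n then f 0 else 0) ?_ ?_
      · rw [Int.cofinite_eq, tendsto_sup]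
        constructor
        · refine hbot.congr' ?_
          filter_upwards [eventually_lt_atBot (0 : ℤ)] with n hn
          simp [not_le.2 hn]
        · have := htop.sub_const (f 0)
          rw [sub_self] at this
          refine this.congr' ?_
          filter_upwards [eventually_ge_atTop (0 : ℤ)] with n hn
          simp [hn]
      · intro n
        rcases eq_or_ne k 0 with rfl | hk0
        · by_cases hn : 0 ≤ n
          · simp [hTe, hn, hP1 n hn, sub_smul]
          · simp [hTe, hn, hP0 n hn]
        · simp [hTe, hk hk0]
    have := Submodule.add_mem_sup hmem
      (Submodule.smul_mem _ (f 0) (Submodule.mem_span_singleton_self (R := ℂ) P))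
    simpa using this
  have hCqK : ∀ a ∈ Cq, ∃ c : ℂ, a - c • P ∈ K := by
    intro a ha
    have hcl : IsClosed ((K ⊔ Submodule.span ℂ {P} : Submodule ℂ (H →L[ℂ] H)) : Set (H →L[ℂ] H)) :=
      Submodule.isClosed_sup_finiteDimensional _ _ (Submodule.isClosed_topologicalClosure _)
    rw [hCq] at ha
    have ha' : a ∈ K ⊔ Submodule.span ℂ {P} :=
      closure_minimal (Submodule.span_le.2 hGK) hcl ha
    obtain ⟨y, hy, z, hz, rfl⟩ := Submodule.mem_sup.1 ha'
    obtain ⟨c, rfl⟩ := Submodule.mem_span_singleton.1 hz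
    exact ⟨c, by simpa using hy⟩
  refine ⟨fun T hT => hKCq T ((hKc T).2 hT), ?_⟩
  obtain ⟨ψ, hψP, hψK⟩ := Submodule.exists_le_ker_of_notMem hPK
  let φ : (H →L[ℂ] H) →ₗ[ℂ] ℂ := (ψ P)⁻¹ • ψ
  have hφP : φ P = 1 := by simp [φ, hψP]
  have hφK : ∀ T ∈ K, φ T = 0 := fun T hT => by
    have : ψ T = 0 := hψK hT
    simp [φ, this]
  have hφc : ∀ a (c : ℂ), a - c • P ∈ K → φ a = c := by
    intro a c h
    have := hφK _ h
    rw [map_sub, map_smul, hφP, smul_eq_mul, mul_one] at this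
    exact sub_eq_zero.1 this
  have hφd : ∀ a ∈ Cq, a - φ a • P ∈ K := by
    intro a ha
    obtain ⟨c, hc⟩ := hCqK a ha
    rwa [hφc a c hc]
  refine ⟨φ, ?_, ?_, ?_, ?_⟩
  · intro a ha b hb
    apply hφc
    have h1 : (a - φ a • P) * b ∈ K := by
      rw [hKc]
      exact ((hKc _).1 (hφd a ha)).comp_clm b
    have h2 : (φ a • P) * (b - φ b • P) ∈ K := by
      rw [hKc]
      exact ((hKc _).1 (hφd b hb)).clm_comp (φ a • P)
    have h3 : a * b - (φ a * φ b) • P = (a - φ a • P) * b + (φ a • P) * (b - φ b • P) := by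
      rw [sub_mul, mul_sub, smul_mul_smul_comm, hPP]
      abel
    rw [h3]
    exact add_mem h1 h2
  · intro a ha
    apply hφc
    have := star_mem_closure e (hφd a ha)
    rwa [star_sub, star_smul, hPs] at this
  · intro c
    refine ⟨c • P, ?_, by rw [map_smul, hφP, smul_eq_mul, mul_one]⟩
    rw [hCq]
    exact subset_closure (Submodule.smul_mem _ _ (Submodule.subset_span hPG))
  · intro a ha
    rw [← hKc]
    refine ⟨fun h => ?_, hφK a⟩
    simpa [h] using hφd a ha
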